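/- arXiv:2304.08270 — 2 statements merged into one kernel-verified Lean document; each statement's English description precedes it below -/
import Mathlib

section
/- Let p and σ be real numbers and c, d real constants. Define b : (−1,1) → ℝ by b(τ) = c + d·∫₀^τ (1+ς)^{−(p+σ+1)}·(1−ς)^{−(p−σ+1)} dς, and a : (−1,1) → ℝ by a(τ) = ((1−τ)/2)^{p−σ}·((1+τ)/2)^{p+σ}·b(τ), using real powers of positive quantities. Then for every τ ∈ (−1,1): (i) (1−τ²)·b''(τ) + 2·(σ − (p+1)·τ)·b'(τ) = 0; and (ii) (1−τ²)·a''(τ) + 2·((p−1)·τ − σ)·a'(τ) + 2p·a(τ) = 0. -/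
/-!
Write `w α β t = (1 - t) ^ α * (1 + t) ^ β`. If `b' = d * w (-(α + 1)) (-(β + 1))`, then the
first-order equation satisfied by the weight `b'` is the Jacobi equation of `b`, with parameters
`(α, β)` and eigenvalue `0`. The function `a = w α β * b` satisfies
`(1 - t ^ 2) * a' = (β - α - (α + β) * t) * a + d`, because `1 - t ^ 2` times the product of the two
weights is `1`; differentiating removes the constant `d` and leaves the Jacobi equation of `a`, with
parameters `(-α, -β)`. The theorem is the case `α = p - σ`, `β = p + σ`, with the factor
`2 ^ (-(2 * p))` absorbed into `b`.
-/

open Set Topology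

theorem hasDerivAt_integral_of_continuousOn {E : Type*} [NormedAddCommGroup E] [NormedSpace ℝ E]
    [CompleteSpace E] {f : ℝ → E} {S : Set ℝ} {x₀ x : ℝ} (hS : IsOpen S) (hS' : S.OrdConnected)
    (hf : ContinuousOn f S) (hx₀ : x₀ ∈ S) (hx : x ∈ S) :
    HasDerivAt (fun u ↦ ∫ t in x₀..u, f t) (f x) x :=
  intervalIntegral.integral_hasDerivAt_right
    (hf.mono (hS'.uIcc_subset hx₀ hx)).intervalIntegrable
    (hf.stronglyMeasurableAtFilter hS x hx) (hf.continuousAt (hS.mem_nhds hx))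

theorem mul_deriv_deriv_of_mul_deriv_eventuallyEq {𝕜 : Type*} [NontriviallyNormedField 𝕜]
    {s r y : 𝕜 → 𝕜} {s' r' K x : 𝕜} (hs : HasDerivAt s s' x) (hr : HasDerivAt r r' x)
    (hsx : s x ≠ 0) (hy : DifferentiableAt 𝕜 y x)
    (h : (fun t ↦ s t * deriv y t) =ᶠ[𝓝 x] fun t ↦ r t * y t + K) :
    s x * deriv (deriv y) x + (s' - r x) * deriv y x - r' * y x = 0 := by
  have hry : HasDerivAt (fun t ↦ r t * y t + K) (r' * y x + r x * deriv y x) x :=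
    (hr.mul hy.hasDerivAt).add_const K
  have hdiff : DifferentiableAt 𝕜 (deriv y) x := by
    have hquot : deriv y =ᶠ[𝓝 x] fun t ↦ (r t * y t + K) / s t := by
      filter_upwards [h, hs.continuousAt.eventually_ne hsx] with t ht hst
      rw [← ht, mul_div_cancel_left₀ _ hst]
    exact (hry.differentiableAt.div hs.differentiableAt hsx).congr_of_eventuallyEq hquot
  have hderiv : s' * deriv y x + s x * deriv (deriv y) x = r' * y x + r x * deriv y x :=
    (hs.mul hdiff.hasDerivAt).unique (hry.congr_of_eventuallyEq h)
  linear_combination hderiv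

/-- The weight `(1 - t) ^ α * (1 + t) ^ β` of the Jacobi polynomials, for arbitrary real exponents.
It is meant for `t ∈ (-1, 1)`, where the bases of the real powers are positive. -/
noncomputable def jacobiWeight (α β t : ℝ) : ℝ := (1 - t) ^ α * (1 + t) ^ β

section JacobiWeight

variable {t : ℝ} (α β : ℝ)

theorem one_sub_sq_mul_jacobiWeight (ht : t ∈ Ioo (-1) 1) :
    (1 - t ^ 2) * jacobiWeight α β t = jacobiWeight (α + 1) (β + 1) t := by
  have hsub : 1 - t ≠ 0 := by linarith [ht.2]
  have hadd : 1 + t ≠ 0 := by linarith [ht.1]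
  rw [jacobiWeight, jacobiWeight, Real.rpow_add_one hsub, Real.rpow_add_one hadd]
  ring

theorem jacobiWeight_mul_jacobiWeight_neg (ht : t ∈ Ioo (-1) 1) :
    jacobiWeight α β t * jacobiWeight (-α) (-β) t = 1 := by
  have hsub : 0 < 1 - t := by linarith [ht.2]
  have hadd : 0 < 1 + t := by linarith [ht.1]
  rw [jacobiWeight, jacobiWeight, Real.rpow_neg hsub.le, Real.rpow_neg hadd.le, ← mul_inv]
  exact mul_inv_cancel₀ (by positivity)

theorem half_rpow_mul_half_rpow_eq_jacobiWeight (ht : t ∈ Ioo (-1) 1) :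
    ((1 - t) / 2) ^ α * ((1 + t) / 2) ^ β = 2 ^ (-(α + β)) * jacobiWeight α β t := by
  have hsub : 0 ≤ 1 - t := by linarith [ht.2]
  have hadd : 0 ≤ 1 + t := by linarith [ht.1]
  rw [jacobiWeight, Real.div_rpow hsub zero_le_two, Real.div_rpow hadd zero_le_two,
    Real.rpow_neg zero_le_two, Real.rpow_add two_pos]
  ring

theorem hasDerivAt_jacobiWeight (ht : t ∈ Ioo (-1) 1) :
    HasDerivAt (jacobiWeight α β)
      ((β - α - (α + β) * t) * jacobiWeight (α - 1) (β - 1) t) t := by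
  have hsub : 1 - t ≠ 0 := by linarith [ht.2]
  have hadd : 1 + t ≠ 0 := by linarith [ht.1]
  have hderiv := (((hasDerivAt_id' t).const_sub 1).rpow_const (p := α) (.inl hsub)).mul
    (((hasDerivAt_id' t).const_add 1).rpow_const (p := β) (.inl hadd))
  refine hderiv.congr_deriv ?_
  rw [jacobiWeight, ← sub_add_cancel α 1, ← sub_add_cancel β 1, Real.rpow_add_one hsub,
    Real.rpow_add_one hadd]
  ring_nf

theorem one_sub_sq_mul_deriv_jacobiWeight (ht : t ∈ Ioo (-1) 1) :
    (1 - t ^ 2) * deriv (jacobiWeight α β) t = (β - α - (α + β) * t) * jacobiWeight α β t := by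
  rw [(hasDerivAt_jacobiWeight α β ht).deriv, mul_left_comm, one_sub_sq_mul_jacobiWeight _ _ ht,
    sub_add_cancel, sub_add_cancel]

theorem continuousOn_jacobiWeight : ContinuousOn (jacobiWeight α β) (Ioo (-1) 1) :=
  fun _ ht ↦ (hasDerivAt_jacobiWeight α β ht).continuousAt.continuousWithinAt

end JacobiWeight

section JacobiEquation

variable {α β d t : ℝ} {a b : ℝ → ℝ}

theorem jacobi_equation_of_hasDerivAt
    (hb : ∀ u ∈ Ioo (-1) 1, HasDerivAt b (d * jacobiWeight (-(α + 1)) (-(β + 1)) u) u)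
    (ht : t ∈ Ioo (-1) 1) :
    (1 - t ^ 2) * deriv (deriv b) t + (β - α - (α + β + 2) * t) * deriv b t = 0 := by
  have hb' : deriv b =ᶠ[𝓝 t] fun u ↦ d * jacobiWeight (-(α + 1)) (-(β + 1)) u := by
    filter_upwards [isOpen_Ioo.mem_nhds ht] with u hu using (hb u hu).deriv
  rw [hb'.deriv_eq, hb'.eq_of_nhds, deriv_const_mul_field]
  linear_combination d * one_sub_sq_mul_deriv_jacobiWeight (-(α + 1)) (-(β + 1)) ht

theorem one_sub_sq_mul_deriv_jacobiWeight_mul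
    (hb : HasDerivAt b (d * jacobiWeight (-(α + 1)) (-(β + 1)) t) t) (ht : t ∈ Ioo (-1) 1) :
    (1 - t ^ 2) * deriv (fun u ↦ jacobiWeight α β u * b u) t =
      (β - α - (α + β) * t) * (jacobiWeight α β t * b t) + d := by
  have hw := (hasDerivAt_jacobiWeight α β ht).differentiableAt
  have hunit : (1 - t ^ 2) * jacobiWeight α β t * jacobiWeight (-(α + 1)) (-(β + 1)) t = 1 := by
    rw [one_sub_sq_mul_jacobiWeight α β ht, jacobiWeight_mul_jacobiWeight_neg _ _ ht]
  rw [deriv_fun_mul hw hb.differentiableAt, hb.deriv]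
  linear_combination b t * one_sub_sq_mul_deriv_jacobiWeight α β ht + d * hunit

theorem jacobi_equation_jacobiWeight_mul
    (hb : ∀ u ∈ Ioo (-1) 1, HasDerivAt b (d * jacobiWeight (-(α + 1)) (-(β + 1)) u) u)
    (ha : EqOn a (fun u ↦ jacobiWeight α β u * b u) (Ioo (-1) 1)) (ht : t ∈ Ioo (-1) 1) :
    (1 - t ^ 2) * deriv (deriv a) t + (α - β + (α + β - 2) * t) * deriv a t
      + (α + β) * a t = 0 := by
  have hs : HasDerivAt (fun u : ℝ ↦ 1 - u ^ 2) (-(2 * t)) t := by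
    simpa using (hasDerivAt_pow 2 t).const_sub 1
  have hr : HasDerivAt (fun u ↦ β - α - (α + β) * u) (-(α + β)) t := by
    simpa using ((hasDerivAt_id' t).const_mul (α + β)).const_sub (β - α)
  have hst : 1 - t ^ 2 ≠ 0 := by nlinarith [ht.1, ht.2]
  have hdiff : DifferentiableAt ℝ a t :=
    ((hasDerivAt_jacobiWeight α β ht).mul (hb t ht)).differentiableAt.congr_of_eventuallyEq
      (ha.eventuallyEq_of_mem (isOpen_Ioo.mem_nhds ht))
  have hfirst : (fun u ↦ (1 - u ^ 2) * deriv a u) =ᶠ[𝓝 t]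
      fun u ↦ (β - α - (α + β) * u) * a u + d := by
    filter_upwards [isOpen_Ioo.mem_nhds ht] with u hu
    rw [ha.deriv isOpen_Ioo hu, ha hu, one_sub_sq_mul_deriv_jacobiWeight_mul (hb u hu) hu]
  linear_combination mul_deriv_deriv_of_mul_deriv_eventuallyEq hs hr hst hdiff hfirst

end JacobiEquation

open intervalIntegral in
/-- The paper's explicit solution (C.11) of the degenerate case `q = p`:
with `b(τ) = c + d·∫₀^τ (1+ς)^{−(p+σ+1)}(1−ς)^{−(p−σ+1)} dς` and
`a(τ) = ((1−τ)/2)^{p−σ}((1+τ)/2)^{p+σ}·b(τ)` one has, on `(−1,1)`,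
`(1−τ²)b'' + 2(σ−(p+1)τ)b' = 0` and `(1−τ²)a'' + 2((p−1)τ−σ)a' + 2p·a = 0`. -/
theorem stmt13 (p σ c d : ℝ) (b a : ℝ → ℝ)
    (hb : ∀ τ ∈ Set.Ioo (-1 : ℝ) 1,
      b τ = c + d * ∫ ς in (0 : ℝ)..τ, (1 + ς) ^ (-(p + σ + 1)) * (1 - ς) ^ (-(p - σ + 1)))
    (ha : ∀ τ ∈ Set.Ioo (-1 : ℝ) 1,
      a τ = ((1 - τ) / 2) ^ (p - σ) * ((1 + τ) / 2) ^ (p + σ) * b τ) :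
    ∀ τ ∈ Set.Ioo (-1 : ℝ) 1,
      ((1 - τ ^ 2) * deriv (deriv b) τ + 2 * (σ - (p + 1) * τ) * deriv b τ = 0) ∧
      ((1 - τ ^ 2) * deriv (deriv a) τ + 2 * ((p - 1) * τ - σ) * deriv a τ
        + 2 * p * a τ = 0) := by
  have hb' : ∀ u ∈ Ioo (-1) 1,
      HasDerivAt b (d * jacobiWeight (-(p - σ + 1)) (-(p + σ + 1)) u) u := by
    intro u hu
    have hint := hasDerivAt_integral_of_continuousOn (x₀ := 0) isOpen_Ioo ordConnected_Ioo
      (continuousOn_jacobiWeight (-(p - σ + 1)) (-(p + σ + 1))) (by norm_num) hu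
    refine ((hint.const_mul d).const_add c).congr_of_eventuallyEq ?_
    filter_upwards [isOpen_Ioo.mem_nhds hu] with v hv
    simp only [hb v hv, jacobiWeight, mul_comm]
  have hkb : ∀ u ∈ Ioo (-1) 1, HasDerivAt (fun v ↦ 2 ^ (-(2 * p)) * b v)
      (2 ^ (-(2 * p)) * d * jacobiWeight (-(p - σ + 1)) (-(p + σ + 1)) u) u :=
    fun u hu ↦ ((hb' u hu).const_mul _).congr_deriv (mul_assoc _ _ _).symm
  have ha' : EqOn a (fun u ↦ jacobiWeight (p - σ) (p + σ) u * (2 ^ (-(2 * p)) * b u))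
      (Ioo (-1) 1) := by
    intro u hu
    rw [ha u hu, half_rpow_mul_half_rpow_eq_jacobiWeight _ _ hu]
    ring_nf
  intro τ hτ
  constructor
  · linear_combination jacobi_equation_of_hasDerivAt hb' hτ
  · linear_combination jacobi_equation_jacobiWeight_mul hkb ha' hτ
end

section
/- Let ζ : ℝ² → ℂ be a smooth function of the variables (τ, ρ) and p a natural number. Define the operator B by (Bζ)(τ,ρ) = (1−τ²)·∂_τ²ζ + 2τρ·∂_τ∂_ρζ − ρ²·∂_ρ²ζ − 2τ·∂_τζ. Then on all of ℝ²: ∂_ρ^p(Bζ) = B(∂_ρ^pζ) + 2τp·∂_τ(∂_ρ^pζ) − 2pρ·∂_ρ(∂_ρ^pζ) − p(p−1)·∂_ρ^pζ. -/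
/-- Partial derivative with respect to the first variable `τ`. -/
noncomputable def pd1 {E : Type*} [NormedAddCommGroup E] [NormedSpace ℝ E]
    (u : ℝ → ℝ → E) : ℝ → ℝ → E := fun τ ρ => deriv (fun t => u t ρ) τ

/-- Partial derivative with respect to the second variable `ρ`. -/
noncomputable def pd2 {E : Type*} [NormedAddCommGroup E] [NormedSpace ℝ E]
    (u : ℝ → ℝ → E) : ℝ → ℝ → E := fun τ ρ => deriv (fun r => u τ r) ρ

/-- The `(τ,ρ)`-part of the reduced wave operator:
`(Bζ)(τ,ρ) = (1−τ²)∂_τ²ζ + 2τρ∂_τ∂_ρζ − ρ²∂_ρ²ζ − 2τ∂_τζ`. -/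
noncomputable def Bop (ζ : ℝ → ℝ → ℂ) : ℝ → ℝ → ℂ := fun τ ρ =>
  ((1 - τ ^ 2 : ℝ) : ℂ) * pd1 (pd1 ζ) τ ρ + ((2 * τ * ρ : ℝ) : ℂ) * pd1 (pd2 ζ) τ ρ
    - ((ρ ^ 2 : ℝ) : ℂ) * pd2 (pd2 ζ) τ ρ - ((2 * τ : ℝ) : ℂ) * pd1 ζ τ ρ

/-!
The single commutator is `[∂_ρ, B] = 2τ∂_τ∂_ρ - 2ρ∂_ρ²`, the two terms coming from the
`ρ`-dependence of the coefficients `2τρ` and `ρ²`. Differentiating the identity for `p` once more,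
`B` contributes this commutator applied to `∂_ρ^pζ`, and the coefficient `-2pρ` contributes
`-2p∂_ρ^(p+1)ζ`; the zeroth-order coefficient therefore grows by `2p` and equals
`0 + 2 + ⋯ + 2(p-1) = p(p-1)`.
-/

open Function (uncurry iterate_succ_apply')

section PartialDerivatives

variable {E : Type*} [NormedAddCommGroup E] [NormedSpace ℝ E] {u : ℝ → ℝ → E} {m n : WithTop ℕ∞}

theorem uncurry_pd1 (hu : Differentiable ℝ (uncurry u)) :
    uncurry (pd1 u) = fun x => fderiv ℝ (uncurry u) x (1, 0) := by
  ext ⟨τ, ρ⟩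
  exact ((hu (τ, ρ)).hasFDerivAt.comp_hasDerivAt τ
    ((hasDerivAt_id τ).prodMk (hasDerivAt_const τ ρ))).deriv

theorem uncurry_pd2 (hu : Differentiable ℝ (uncurry u)) :
    uncurry (pd2 u) = fun x => fderiv ℝ (uncurry u) x (0, 1) := by
  ext ⟨τ, ρ⟩
  exact ((hu (τ, ρ)).hasFDerivAt.comp_hasDerivAt ρ
    ((hasDerivAt_const ρ τ).prodMk (hasDerivAt_id ρ))).deriv

theorem hasDerivAt_pd2 (hu : Differentiable ℝ (uncurry u)) (τ ρ : ℝ) :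
    HasDerivAt (u τ) (pd2 u τ ρ) ρ :=
  ((hu (τ, ρ)).comp ρ ((differentiableAt_const τ).prodMk differentiableAt_id)).hasDerivAt

theorem contDiff_uncurry_pd1 (hu : ContDiff ℝ n (uncurry u)) (hmn : m + 1 ≤ n) :
    ContDiff ℝ m (uncurry (pd1 u)) := by
  rw [uncurry_pd1 ((hu.of_le hmn).differentiable (by simp))]
  exact (hu.fderiv_right hmn).clm_apply contDiff_const

theorem contDiff_uncurry_pd2 (hu : ContDiff ℝ n (uncurry u)) (hmn : m + 1 ≤ n) :
    ContDiff ℝ m (uncurry (pd2 u)) := by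
  rw [uncurry_pd2 ((hu.of_le hmn).differentiable (by simp))]
  exact (hu.fderiv_right hmn).clm_apply contDiff_const

theorem contDiff_uncurry_iterate_pd2 {p : ℕ} (hu : ContDiff ℝ n (uncurry u)) (hmn : m + p ≤ n) :
    ContDiff ℝ m (uncurry (pd2^[p] u)) := by
  induction p generalizing m with
  | zero => exact hu.of_le (by simpa using hmn)
  | succ p ih =>
    rw [iterate_succ_apply']
    refine contDiff_uncurry_pd2 (ih ?_) le_rfl
    rwa [add_assoc, add_comm 1, ← Nat.cast_succ]

theorem pd2_pd1_comm (hu : ContDiff ℝ 2 (uncurry u)) : pd2 (pd1 u) = pd1 (pd2 u) := by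
  have h2 : (1 + 1 : WithTop ℕ∞) ≤ 2 := one_add_one_eq_two.le
  have hd : Differentiable ℝ (uncurry u) := hu.differentiable two_ne_zero
  have hd1 : Differentiable ℝ (uncurry (pd1 u)) :=
    (contDiff_uncurry_pd1 hu h2).differentiable one_ne_zero
  have hd2 : Differentiable ℝ (uncurry (pd2 u)) :=
    (contDiff_uncurry_pd2 hu h2).differentiable one_ne_zero
  have hfd : Differentiable ℝ (fderiv ℝ (uncurry u)) :=
    (hu.fderiv_right h2).differentiable one_ne_zero
  have hsymm (x : ℝ × ℝ) : IsSymmSndFDerivAt ℝ (uncurry u) x :=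
    hu.contDiffAt.isSymmSndFDerivAt (by simp)
  apply Function.uncurry_injective
  rw [uncurry_pd2 hd1, uncurry_pd1 hd2, uncurry_pd1 hd, uncurry_pd2 hd]
  ext x
  simpa [fderiv_clm_apply (hfd x)] using hsymm x (0, 1) (1, 0)

theorem hasDerivAt_pd1_pd2 (hu : ContDiff ℝ 2 (uncurry u)) (τ ρ : ℝ) :
    HasDerivAt (pd1 u τ) (pd1 (pd2 u) τ ρ) ρ := by
  rw [← pd2_pd1_comm hu]
  exact hasDerivAt_pd2
    ((contDiff_uncurry_pd1 hu one_add_one_eq_two.le).differentiable one_ne_zero) τ ρ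

end PartialDerivatives

theorem hasDerivAt_Bop {w : ℝ → ℝ → ℂ} (hw : ContDiff ℝ 3 (uncurry w)) (τ ρ : ℝ) :
    HasDerivAt (Bop w τ) (Bop (pd2 w) τ ρ + ((2 * τ : ℝ) : ℂ) * pd1 (pd2 w) τ ρ
      - ((2 * ρ : ℝ) : ℂ) * pd2 (pd2 w) τ ρ) ρ := by
  have hw_two : ContDiff ℝ 2 (uncurry w) := hw.of_le (by norm_num)
  have hw1 : ContDiff ℝ 2 (uncurry (pd1 w)) := contDiff_uncurry_pd1 hw two_add_one_eq_three.le
  have hw2 : ContDiff ℝ 2 (uncurry (pd2 w)) := contDiff_uncurry_pd2 hw two_add_one_eq_three.le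
  have hw22 : ContDiff ℝ 1 (uncurry (pd2 (pd2 w))) :=
    contDiff_uncurry_pd2 hw2 one_add_one_eq_two.le
  have d1 : HasDerivAt (pd1 w τ) (pd1 (pd2 w) τ ρ) ρ := hasDerivAt_pd1_pd2 hw_two τ ρ
  have d11 : HasDerivAt (pd1 (pd1 w) τ) (pd1 (pd1 (pd2 w)) τ ρ) ρ := by
    rw [← pd2_pd1_comm hw_two]
    exact hasDerivAt_pd1_pd2 hw1 τ ρ
  have d12 : HasDerivAt (pd1 (pd2 w) τ) (pd1 (pd2 (pd2 w)) τ ρ) ρ := hasDerivAt_pd1_pd2 hw2 τ ρ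
  have d22 : HasDerivAt (pd2 (pd2 w) τ) (pd2 (pd2 (pd2 w)) τ ρ) ρ :=
    hasDerivAt_pd2 (hw22.differentiable one_ne_zero) τ ρ
  have dρ : HasDerivAt (fun r : ℝ => ((2 * τ * r : ℝ) : ℂ)) ((2 * τ : ℝ) : ℂ) ρ :=
    (hasDerivAt_const_mul (2 * τ)).ofReal_comp
  have dρ_sq : HasDerivAt (fun r : ℝ => ((r ^ 2 : ℝ) : ℂ)) ((2 * ρ : ℝ) : ℂ) ρ := by
    simpa using (hasDerivAt_pow 2 ρ).ofReal_comp
  refine ((((d11.const_mul _).fun_add (dρ.fun_mul d12)).fun_sub (dρ_sq.fun_mul d22)).fun_sub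
    (d1.const_mul _)).congr_deriv ?_
  simp only [Bop]
  ring

theorem stmt15_general {p : ℕ} {ζ : ℝ → ℝ → ℂ} (hζ : ContDiff ℝ (p + 2) (uncurry ζ)) (τ ρ : ℝ) :
    pd2^[p] (Bop ζ) τ ρ
      = Bop (pd2^[p] ζ) τ ρ + ((2 * τ * (p : ℝ) : ℝ) : ℂ) * pd1 (pd2^[p] ζ) τ ρ
        - ((2 * (p : ℝ) * ρ : ℝ) : ℂ) * pd2 (pd2^[p] ζ) τ ρ
        - (((p : ℝ) * ((p : ℝ) - 1) : ℝ) : ℂ) * pd2^[p] ζ τ ρ := by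
  induction p generalizing τ ρ with
  | zero => simp
  | succ p ih =>
    have ih' : pd2^[p] (Bop ζ) τ = _ := funext (ih (hζ.of_le (by gcongr; simp)) τ)
    rw [iterate_succ_apply', iterate_succ_apply', pd2, ih']
    have h_order : (3 + p : WithTop ℕ∞) = (p + 1 : ℕ) + 2 := by
      rw [← two_add_one_eq_three]
      push_cast
      ring
    have hw : ContDiff ℝ 3 (uncurry (pd2^[p] ζ)) := contDiff_uncurry_iterate_pd2 hζ h_order.le
    generalize pd2^[p] ζ = w at hw ⊢
    have hw2 : ContDiff ℝ 2 (uncurry (pd2 w)) := contDiff_uncurry_pd2 hw two_add_one_eq_three.le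
    have d0 : HasDerivAt (w τ) (pd2 w τ ρ) ρ :=
      hasDerivAt_pd2 (hw.differentiable three_ne_zero) τ ρ
    have d1 : HasDerivAt (pd1 w τ) (pd1 (pd2 w) τ ρ) ρ :=
      hasDerivAt_pd1_pd2 (hw.of_le (by norm_num)) τ ρ
    have d2 : HasDerivAt (pd2 w τ) (pd2 (pd2 w) τ ρ) ρ :=
      hasDerivAt_pd2 (hw2.differentiable two_ne_zero) τ ρ
    have dρ : HasDerivAt (fun r : ℝ => ((2 * p * r : ℝ) : ℂ)) ((2 * p : ℝ) : ℂ) ρ :=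
      (hasDerivAt_const_mul (2 * (p : ℝ))).ofReal_comp
    have d_rhs := (((hasDerivAt_Bop hw τ ρ).fun_add (d1.const_mul ((2 * τ * p : ℝ) : ℂ))).fun_sub
      (dρ.fun_mul d2)).fun_sub (d0.const_mul ((p * (p - 1) : ℝ) : ℂ))
    rw [d_rhs.deriv]
    push_cast
    ring

/-- The commutator identity `∂_ρ^p(Bζ) = B(∂_ρ^pζ) + 2τp·∂_τ(∂_ρ^pζ)
− 2pρ·∂_ρ(∂_ρ^pζ) − p(p−1)·∂_ρ^pζ`. -/
theorem stmt15 (ζ : ℝ → ℝ → ℂ) (hζ : ContDiff ℝ (⊤ : ℕ∞) (Function.uncurry ζ)) (p : ℕ) :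
    ∀ τ ρ : ℝ,
      pd2^[p] (Bop ζ) τ ρ
      = Bop (pd2^[p] ζ) τ ρ + ((2 * τ * (p : ℝ) : ℝ) : ℂ) * pd1 (pd2^[p] ζ) τ ρ
        - ((2 * (p : ℝ) * ρ : ℝ) : ℂ) * pd2 (pd2^[p] ζ) τ ρ
        - (((p : ℝ) * ((p : ℝ) - 1) : ℝ) : ℂ) * pd2^[p] ζ τ ρ :=
  stmt15_general (contDiff_infty.mp hζ (p + 2))
end
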